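/- arXiv:1501.04817 — 3 statements merged into one kernel-verified Lean document; each statement's English description precedes it below -/
import Mathlib

section
/- Let Φ ∈ ℝ^{m×n} have restricted isometry constant δ := δ_{2K} ∈ (0,1) of order 2K, let x ∈ ℝ^n be K-sparse with support T, |T| = K ≥ 1, set κ := max_{i,j∈T} |x_i|/|x_j| and τ := δ^{1/2}, and let y = Φx + v with v ≠ 0 and SNR ≥ κ²·δ^{−3/2}. Then for every run of OMP and every integer k with 0 ≤ k ≤ K − ⌈τK⌉, the residuals satisfy ‖r^k‖₂² − ‖r^{k+1}‖₂² ≥ (1 − 7τ)·(x_τ^k)². -/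
noncomputable section
open Finset

/-- `Vec n` is `ℝ^n` with the Euclidean (ℓ²) norm. -/
abbrev Vec (n : ℕ) := EuclideanSpace ℝ (Fin n)

/-- The standard inner product `⟨u, v⟩ = ∑ i, u i * v i`. -/
def dot {n : ℕ} (u v : Vec n) : ℝ := ∑ i, u i * v i

/-- The `j`-th column of a matrix, as a Euclidean vector. -/
def col {m n : ℕ} (Φ : Matrix (Fin m) (Fin n) ℝ) (j : Fin n) : Vec m :=
  WithLp.toLp 2 fun i => Φ i j

/-- Matrix-vector multiplication `Φ x`, valued in Euclidean space. -/
def mulVec' {m n : ℕ} (Φ : Matrix (Fin m) (Fin n) ℝ) (x : Vec n) : Vec m :=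
  WithLp.toLp 2 fun i => ∑ j, Φ i j * x j

/-- The support of a vector, as a `Finset`. -/
def suppF {n : ℕ} (x : Vec n) : Finset (Fin n) :=
  Finset.univ.filter fun i => x i ≠ 0

/-- Restriction of a vector to an index set (zero outside the set). -/
def restrict {n : ℕ} (x : Vec n) (S : Finset (Fin n)) : Vec n :=
  WithLp.toLp 2 fun i => if i ∈ S then x i else 0

/-- `RIPConst Φ L δ` : δ is the restricted isometry constant of `Φ` of order `L`,
i.e. the smallest `c ≥ 0` such that `(1-c)‖u‖² ≤ ‖Φu‖² ≤ (1+c)‖u‖²` for all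
`L`-sparse `u`. -/
def RIPConst {m n : ℕ} (Φ : Matrix (Fin m) (Fin n) ℝ) (L : ℕ) (δ : ℝ) : Prop :=
  IsLeast {c : ℝ | 0 ≤ c ∧ ∀ u : Vec n, (suppF u).card ≤ L →
    (1 - c) * ‖u‖ ^ 2 ≤ ‖mulVec' Φ u‖ ^ 2 ∧ ‖mulVec' Φ u‖ ^ 2 ≤ (1 + c) * ‖u‖ ^ 2} δ

/-- Signal-to-noise ratio `‖Φx‖²/‖v‖²`. -/
def SNR {m n : ℕ} (Φ : Matrix (Fin m) (Fin n) ℝ) (x : Vec n) (v : Vec m) : ℝ :=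
  ‖mulVec' Φ x‖ ^ 2 / ‖v‖ ^ 2

/-- A run of `N` iterations of Orthogonal Matching Pursuit on data `(Φ, y)`:
`idx (k+1) = t^{k+1}` is the index selected at iteration `k+1`, `sets k = T^k`,
`est k = x^k` and `res k = r^k`. -/
structure OMPRun {m n : ℕ} (Φ : Matrix (Fin m) (Fin n) ℝ) (y : Vec m) (N : ℕ) where
  idx : ℕ → Fin n
  sets : ℕ → Finset (Fin n)
  est : ℕ → Vec n
  res : ℕ → Vec m
  sets_zero : sets 0 = ∅
  est_zero : est 0 = 0
  res_zero : res 0 = y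
  idx_not_mem : ∀ k < N, idx (k + 1) ∉ sets k
  idx_max : ∀ k < N, ∀ i : Fin n, i ∉ sets k →
    |dot (col Φ i) (res k)| ≤ |dot (col Φ (idx (k + 1))) (res k)|
  sets_succ : ∀ k < N, sets (k + 1) = insert (idx (k + 1)) (sets k)
  est_supp : ∀ k < N, suppF (est (k + 1)) ⊆ sets (k + 1)
  est_min : ∀ k < N, ∀ u : Vec n, suppF u ⊆ sets (k + 1) →
    ‖y - mulVec' Φ (est (k + 1))‖ ≤ ‖y - mulVec' Φ u‖
  res_succ : ∀ k < N, res (k + 1) = y - mulVec' Φ (est (k + 1))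

/-- The vector `Φᵀ w` restricted to an index set `A` (the vector of correlations
`⟨φ_i, w⟩` for `i ∈ A`, zero outside `A`), as a Euclidean vector. -/
def colDots {m n : ℕ} (Φ : Matrix (Fin m) (Fin n) ℝ) (A : Finset (Fin n)) (w : Vec m) : Vec n :=
  WithLp.toLp 2 fun i => if i ∈ A then dot (col Φ i) w else 0

/-- The vector `Φᵀ w` of all column correlations, as a plain function (so `‖·‖`
is the sup/ℓ∞ norm). -/
def dualVec {m n : ℕ} (Φ : Matrix (Fin m) (Fin n) ℝ) (w : Vec m) : Fin n → ℝ :=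
  fun i => dot (col Φ i) w

/-- `P⊥_S w` : the projection of `w` onto the orthogonal complement of the span
of the columns of `Φ` indexed by `S`. -/
def perpProj {m n : ℕ} (Φ : Matrix (Fin m) (Fin n) ℝ) (S : Finset (Fin n)) (w : Vec m) : Vec m :=
  w - (Submodule.orthogonalProjectionOnto (Submodule.span ℝ (col Φ '' (S : Set (Fin n)))) w : Vec m)

/-- The `j`-th largest value (1-indexed) among `{|x i| : i ∈ Γ}` (with
multiplicities); `0` if `j > |Γ|` or `j = 0`. -/
def kthLargest {n : ℕ} (x : Vec n) (Γ : Finset (Fin n)) (j : ℕ) : ℝ :=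
  if 1 ≤ j ∧ j ≤ Γ.card then
    (Multiset.sort (Γ.val.map fun i => |x i|) (· ≤ ·)).getD (Γ.card - j) 0
  else 0

/-!
Write `u = x - x^k`, so that `r^k = Φu + v`, and let `S` be the set of entries of `x` outside `T^k`
that are at least `a = x_τ^k` in absolute value; it has at least `τK` elements. By polarisation the
restricted isometry property gives, for `A` in the joint support,
`‖u_A‖² - δ‖u_A‖‖u‖ - √(1+δ)‖u_A‖‖v‖ ≤ ⟨Φu_A, r^k⟩`.
For `A = T^k` the right side vanishes, as `r^k` is orthogonal to the selected columns, which bounds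
the part of `u` living on `T^k`. For `A = S` it is at most `√|S|‖u_S‖` times the largest correlation
`M` of a column with `r^k`. The signal-to-noise hypothesis makes `v` negligible and the remaining
entries of `u` are at most `a`, so the error terms amount to at most `3τ‖u_S‖`; since
`‖u_S‖ ≥ √|S| a`, this yields `(1 - 3τ) a ≤ M`. Selecting the best column then lowers `‖r^k‖²` by at
least `M² / (1+δ)`, and `(1 - 7τ)(1 + τ²) ≤ (1 - 3τ)²`.
-/

open scoped RealInnerProductSpace

section InnerProductSpace

variable {E F : Type*} [NormedAddCommGroup E] [InnerProductSpace ℝ E]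
  [NormedAddCommGroup F] [InnerProductSpace ℝ F]

theorem abs_inner_map_sub_inner_le {f : E →ₗ[ℝ] F} {δ : ℝ}
    (hf : ∀ u, |‖f u‖ ^ 2 - ‖u‖ ^ 2| ≤ δ * ‖u‖ ^ 2) (a b : E) :
    |⟪f a, f b⟫ - ⟪a, b⟫| ≤ δ * (‖a‖ * ‖b‖) := by
  have polarised (a b : E) : |⟪f a, f b⟫ - ⟪a, b⟫| ≤ δ / 2 * (‖a‖ ^ 2 + ‖b‖ ^ 2) := by
    have hadd := abs_le.1 (hf (a + b))
    have hsub := abs_le.1 (hf (a - b))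
    rw [map_add, norm_add_sq_real, norm_add_sq_real] at hadd
    rw [map_sub, norm_sub_sq_real, norm_sub_sq_real] at hsub
    exact abs_le.2 ⟨by linarith [hadd.1, hsub.2], by linarith [hadd.2, hsub.1]⟩
  rcases eq_or_ne a 0 with rfl | ha
  · simp
  rcases eq_or_ne b 0 with rfl | hb
  · simp
  have hab : 0 < ‖a‖ * ‖b‖ := mul_pos (norm_pos_iff.2 ha) (norm_pos_iff.2 hb)
  -- Rescaling both vectors to norm `‖a‖‖b‖` turns the sum of squares into a product.
  have hscaled := polarised (‖b‖ • a) (‖a‖ • b)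
  have hfactor : ⟪f (‖b‖ • a), f (‖a‖ • b)⟫ - ⟪‖b‖ • a, ‖a‖ • b⟫ =
      ‖a‖ * ‖b‖ * (⟪f a, f b⟫ - ⟪a, b⟫) := by
    simp only [map_smul, real_inner_smul_left, real_inner_smul_right]
    ring
  rw [hfactor, abs_mul, abs_of_pos hab, norm_smul, norm_smul, norm_norm, norm_norm] at hscaled
  refine le_of_mul_le_mul_left ?_ hab
  linarith

theorem sq_inner_le_of_forall_le_norm_sub_smul {r w : E} {b : ℝ} (hb : 0 ≤ b)
    (h : ∀ c : ℝ, b ≤ ‖r - c • w‖) : ⟪w, r⟫ ^ 2 ≤ ‖w‖ ^ 2 * (‖r‖ ^ 2 - b ^ 2) := by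
  rcases eq_or_ne w 0 with rfl | hw
  · simp
  have hw : 0 < ‖w‖ ^ 2 := by positivity
  set c := ⟪w, r⟫ / ‖w‖ ^ 2 with hc
  have hsq : b ^ 2 ≤ ‖r - c • w‖ ^ 2 := pow_le_pow_left₀ hb (h c) 2
  have hexpand : ‖r - c • w‖ ^ 2 = ‖r‖ ^ 2 - ⟪w, r⟫ ^ 2 / ‖w‖ ^ 2 := by
    rw [norm_sub_sq_real, real_inner_smul_right, norm_smul, mul_pow, Real.norm_eq_abs, sq_abs,
      real_inner_comm, hc]
    field
  rw [← div_le_iff₀' hw]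
  linarith

end InnerProductSpace

section Coordinates

variable {m n : ℕ} {Φ : Matrix (Fin m) (Fin n) ℝ} {x u : Vec n} {A B S : Finset (Fin n)} {a : ℝ}

theorem dot_eq_inner (u v : Vec n) : dot u v = ⟪u, v⟫ := by
  simp [dot, PiLp.inner_apply, mul_comm]

theorem mulVec'_eq_toEuclideanLin (x : Vec n) : mulVec' Φ x = Matrix.toEuclideanLin Φ x := rfl

theorem mulVec'_single_one (i : Fin n) : mulVec' Φ (EuclideanSpace.single i 1) = col Φ i := by
  ext
  simp [mulVec', col]

/-- The coordinate subspace of vectors whose support is contained in `S`. -/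
def supportedOn (S : Finset (Fin n)) : Submodule ℝ (Vec n) where
  carrier := {u | ∀ i ∉ S, u i = 0}
  zero_mem' := by simp
  add_mem' hu hv i hi := by simp [hu i hi, hv i hi]
  smul_mem' c u hu i hi := by simp [hu i hi]

theorem mem_supportedOn : u ∈ supportedOn S ↔ ∀ i ∉ S, u i = 0 := Iff.rfl

theorem mem_supportedOn_iff_suppF_subset : u ∈ supportedOn S ↔ suppF u ⊆ S := by
  simp only [mem_supportedOn, suppF, Finset.subset_iff, Finset.mem_filter, Finset.mem_univ,
    true_and, not_imp_comm, ne_eq]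

theorem supportedOn_mono (h : A ⊆ B) : supportedOn A ≤ supportedOn B :=
  fun _ hu i hi ↦ hu i fun hiA ↦ hi (h hiA)

theorem single_mem_supportedOn {i : Fin n} (hi : i ∈ S) (c : ℝ) :
    EuclideanSpace.single i c ∈ supportedOn S := by
  rintro j hj
  simp [ne_of_mem_of_not_mem hi hj |>.symm]

theorem restrict_mem_supportedOn (u : Vec n) (S : Finset (Fin n)) :
    restrict u S ∈ supportedOn S := by
  intro i hi
  simp [_root_.restrict, hi]

theorem restrict_eq_self (hu : u ∈ supportedOn S) : restrict u S = u := by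
  ext i
  by_cases hi : i ∈ S <;> simp [_root_.restrict, hi, mem_supportedOn.1 hu]

theorem norm_sq_restrict (u : Vec n) (S : Finset (Fin n)) :
    ‖restrict u S‖ ^ 2 = ∑ i ∈ S, u i ^ 2 := by
  simp [EuclideanSpace.real_norm_sq_eq, _root_.restrict]

theorem inner_restrict_self (u : Vec n) (S : Finset (Fin n)) :
    ⟪restrict u S, u⟫ = ‖restrict u S‖ ^ 2 := by
  rw [norm_sq_restrict, ← dot_eq_inner]
  simp [dot, _root_.restrict, pow_two]

theorem norm_restrict_union_le (u : Vec n) (A B : Finset (Fin n)) :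
    ‖restrict u (A ∪ B)‖ ≤ ‖restrict u A‖ + ‖restrict u B‖ := by
  refine le_of_sq_le_sq ?_ (by positivity)
  have hinter : 0 ≤ ∑ i ∈ A ∩ B, u i ^ 2 := Finset.sum_nonneg fun i _ ↦ sq_nonneg _
  calc ‖restrict u (A ∪ B)‖ ^ 2 ≤ ‖restrict u A‖ ^ 2 + ‖restrict u B‖ ^ 2 := by
        simp only [norm_sq_restrict]
        linarith [Finset.sum_union_inter (s₁ := A) (s₂ := B) (f := fun i ↦ u i ^ 2)]
    _ ≤ (‖restrict u A‖ + ‖restrict u B‖) ^ 2 := by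
        nlinarith [norm_nonneg (restrict u A), norm_nonneg (restrict u B)]

theorem sqrt_card_mul_le_norm_restrict (ha : 0 ≤ a) (h : ∀ i ∈ S, a ≤ |u i|) :
    √(#S) * a ≤ ‖restrict u S‖ := by
  refine le_of_sq_le_sq ?_ (norm_nonneg _)
  rw [mul_pow, Real.sq_sqrt (by positivity), norm_sq_restrict, ← nsmul_eq_mul]
  refine Finset.card_nsmul_le_sum _ _ _ fun i hi ↦ ?_
  rw [← sq_abs (u i)]
  exact pow_le_pow_left₀ ha (h i hi) 2

theorem norm_restrict_le_sqrt_card_mul (ha : 0 ≤ a) (h : ∀ i ∈ S, |u i| ≤ a) :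
    ‖restrict u S‖ ≤ √(#S) * a := by
  refine le_of_sq_le_sq ?_ (by positivity)
  rw [mul_pow, Real.sq_sqrt (by positivity), norm_sq_restrict, ← nsmul_eq_mul]
  refine Finset.sum_le_card_nsmul _ _ _ fun i hi ↦ ?_
  obtain ⟨hlower, hupper⟩ := abs_le.1 (h i hi)
  exact sq_le_sq' hlower hupper

theorem inner_mulVec'_restrict (u : Vec n) (S : Finset (Fin n)) (w : Vec m) :
    ⟪mulVec' Φ (restrict u S), w⟫ = ⟪restrict u S, colDots Φ S w⟫ := by
  simp only [← dot_eq_inner, dot, mulVec', colDots, col, _root_.restrict, Finset.sum_mul]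
  rw [Finset.sum_comm]
  refine Finset.sum_congr rfl fun i _ ↦ ?_
  split_ifs
  · rw [Finset.mul_sum]
    exact Finset.sum_congr rfl fun j _ ↦ by ring
  · simp

theorem inner_mulVec'_restrict_le {M : ℝ} {w : Vec m} (u : Vec n) (hM₀ : 0 ≤ M)
    (hM : ∀ i ∈ S, |dot (col Φ i) w| ≤ M) :
    ⟪mulVec' Φ (restrict u S), w⟫ ≤ √(#S) * M * ‖restrict u S‖ := by
  have hcorr : ‖colDots Φ S w‖ ≤ √(#S) * M :=
    norm_restrict_le_sqrt_card_mul (u := WithLp.toLp 2 (dualVec Φ w)) hM₀ hM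
  calc ⟪mulVec' Φ (restrict u S), w⟫ = ⟪restrict u S, colDots Φ S w⟫ :=
        inner_mulVec'_restrict u S w
    _ ≤ ‖restrict u S‖ * ‖colDots Φ S w‖ := real_inner_le_norm _ _
    _ ≤ √(#S) * M * ‖restrict u S‖ := by rw [mul_comm]; gcongr

end Coordinates

section OrderStatistics

variable {n : ℕ} {Γ : Finset (Fin n)} {j : ℕ}

theorem kthLargest_eq_zero (x : Vec n) (h : ¬(1 ≤ j ∧ j ≤ #Γ)) : kthLargest x Γ j = 0 := if_neg h

theorem exists_abs_eq_kthLargest (x : Vec n) (hj₁ : 1 ≤ j) (hj : j ≤ #Γ) :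
    ∃ i ∈ Γ, |x i| = kthLargest x Γ j := by
  set l := (Γ.val.map fun i ↦ |x i|).sort (· ≤ ·) with hl
  have hlen : l.length = #Γ := by simp [hl]
  have hlt : #Γ - j < l.length := by omega
  have hmem : l[#Γ - j] ∈ (l : Multiset ℝ) := by simp
  rw [Multiset.sort_eq, Multiset.mem_map] at hmem
  obtain ⟨i, hi, hxi⟩ := hmem
  exact ⟨i, hi, by rw [kthLargest, if_pos ⟨hj₁, hj⟩, ← hl, List.getD_eq_getElem _ _ hlt, hxi]⟩

theorem kthLargest_nonneg (x : Vec n) (Γ : Finset (Fin n)) (j : ℕ) : 0 ≤ kthLargest x Γ j := by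
  by_cases h : 1 ≤ j ∧ j ≤ #Γ
  · obtain ⟨i, -, hi⟩ := exists_abs_eq_kthLargest x h.1 h.2
    exact hi.subst (abs_nonneg _)
  · exact (kthLargest_eq_zero x h).ge

theorem le_card_filter_kthLargest_le (x : Vec n) (hj : j ≤ #Γ) :
    j ≤ #{i ∈ Γ | kthLargest x Γ j ≤ |x i|} := by
  rcases Nat.eq_zero_or_pos j with rfl | hj₁
  · exact Nat.zero_le _
  set l := (Γ.val.map fun i ↦ |x i|).sort (· ≤ ·) with hl
  have hlen : l.length = #Γ := by simp [hl]
  have hlt : #Γ - j < l.length := by omega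
  have hkth : kthLargest x Γ j = l[#Γ - j] := by
    rw [kthLargest, if_pos ⟨hj₁, hj⟩, ← hl, List.getD_eq_getElem _ _ hlt]
  have hsorted : l.SortedLE := (Multiset.pairwise_sort _ _).sortedLE
  have hdrop : ∀ b ∈ l.drop (#Γ - j), l[#Γ - j] ≤ b := by
    intro b hb
    obtain ⟨i, hi, rfl⟩ := List.mem_drop_iff_getElem.1 hb
    exact hsorted.getElem_le_getElem_of_le (by omega)
  calc j = (l.drop (#Γ - j)).length := by rw [List.length_drop]; omega
    _ = (l.drop (#Γ - j)).countP (l[#Γ - j] ≤ ·) := by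
        rw [List.countP_eq_length.2 (by simpa using hdrop)]
    _ ≤ l.countP (l[#Γ - j] ≤ ·) := (List.drop_sublist _ _).countP_le
    _ = #{i ∈ Γ | kthLargest x Γ j ≤ |x i|} := by
        rw [← Multiset.coe_countP, Multiset.sort_eq, Multiset.countP_map, hkth]
        rfl

end OrderStatistics

/-- `Φ` satisfies the restricted isometry property of order `L` with constant `δ`, where `δ` need
not be the smallest such constant: it may be any upper bound for the restricted isometry constant
`δ_L`. -/
def HasRIP {m n : ℕ} (Φ : Matrix (Fin m) (Fin n) ℝ) (L : ℕ) (δ : ℝ) : Prop :=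
  ∀ u : Vec n, #(suppF u) ≤ L →
    (1 - δ) * ‖u‖ ^ 2 ≤ ‖mulVec' Φ u‖ ^ 2 ∧ ‖mulVec' Φ u‖ ^ 2 ≤ (1 + δ) * ‖u‖ ^ 2

namespace HasRIP

variable {m n L : ℕ} {Φ : Matrix (Fin m) (Fin n) ℝ} {δ : ℝ} {u w : Vec n} {v : Vec m}
  {A B : Finset (Fin n)}

theorem norm_sq_mulVec'_le (hΦ : HasRIP Φ L δ) (hu : u ∈ supportedOn B) (hB : #B ≤ L) :
    ‖mulVec' Φ u‖ ^ 2 ≤ (1 + δ) * ‖u‖ ^ 2 :=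
  (hΦ u ((Finset.card_le_card (mem_supportedOn_iff_suppF_subset.1 hu)).trans hB)).2

theorem norm_mulVec'_le (hΦ : HasRIP Φ L δ) (hδ : 0 ≤ δ) (hu : u ∈ supportedOn B)
    (hB : #B ≤ L) : ‖mulVec' Φ u‖ ≤ √(1 + δ) * ‖u‖ := by
  refine le_of_sq_le_sq ?_ (by positivity)
  rw [mul_pow, Real.sq_sqrt (by positivity)]
  exact hΦ.norm_sq_mulVec'_le hu hB

theorem norm_sq_col_le (hΦ : HasRIP Φ L δ) (hL : 1 ≤ L) (i : Fin n) : ‖col Φ i‖ ^ 2 ≤ 1 + δ := by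
  have h := hΦ.norm_sq_mulVec'_le (single_mem_supportedOn (Finset.mem_singleton_self i) 1) hL
  rwa [mulVec'_single_one, PiLp.norm_single, norm_one, one_pow, mul_one] at h

theorem abs_inner_mulVec'_sub_inner_le (hΦ : HasRIP Φ L δ) (hB : #B ≤ L)
    (hu : u ∈ supportedOn B) (hw : w ∈ supportedOn B) :
    |⟪mulVec' Φ u, mulVec' Φ w⟫ - ⟪u, w⟫| ≤ δ * (‖u‖ * ‖w‖) := by
  have hnorm (z : supportedOn B) :
      |‖Matrix.toEuclideanLin Φ z‖ ^ 2 - ‖(z : Vec n)‖ ^ 2| ≤ δ * ‖(z : Vec n)‖ ^ 2 := by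
    have h := hΦ z
      ((Finset.card_le_card (mem_supportedOn_iff_suppF_subset.1 z.2)).trans hB)
    rw [mulVec'_eq_toEuclideanLin] at h
    exact abs_le.2 ⟨by linarith [h.1], by linarith [h.2]⟩
  exact abs_inner_map_sub_inner_le
    (f := (Matrix.toEuclideanLin Φ).domRestrict (supportedOn B)) hnorm ⟨u, hu⟩ ⟨w, hw⟩

theorem norm_restrict_le_add (hΦ : HasRIP Φ L δ) (hδ : 0 ≤ δ) (hB : #B ≤ L)
    (hu : u ∈ supportedOn B) (hA : A ⊆ B) {c : ℝ} (hc : 0 ≤ c)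
    (h : ⟪mulVec' Φ (restrict u A), mulVec' Φ u + v⟫ ≤ c * ‖restrict u A‖) :
    ‖restrict u A‖ ≤ δ * ‖u‖ + √(1 + δ) * ‖v‖ + c := by
  rcases (norm_nonneg (restrict u A)).eq_or_lt with hzero | hpos
  · rw [← hzero]
    positivity
  have hmem := supportedOn_mono hA (restrict_mem_supportedOn u A)
  have hsignal := (abs_le.1 (hΦ.abs_inner_mulVec'_sub_inner_le hB hmem hu)).1
  rw [inner_restrict_self] at hsignal
  have hnoise : -(√(1 + δ) * ‖restrict u A‖ * ‖v‖) ≤ ⟪mulVec' Φ (restrict u A), v⟫ := by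
    refine neg_le_of_neg_le ((neg_le_abs _).trans ((abs_real_inner_le_norm _ _).trans ?_))
    gcongr
    exact hΦ.norm_mulVec'_le hδ hmem hB
  rw [inner_add_right] at h
  refine le_of_mul_le_mul_right ?_ hpos
  linarith

end HasRIP

section Greedy

variable {m n L : ℕ} {Φ : Matrix (Fin m) (Fin n) ℝ} {τ a : ℝ} {x u : Vec n} {v : Vec m}
  {A S Γ : Finset (Fin n)}

theorem mul_sqrt_le_sqrt_of_mul_le {s t : ℝ} (hτ : 0 ≤ τ) (hτ₁ : τ ≤ 1) (ht : 0 ≤ t)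
    (h : τ * t ≤ s) : τ * √t ≤ √s := by
  refine Real.le_sqrt_of_sq_le ?_
  rw [mul_pow, Real.sq_sqrt ht]
  nlinarith [mul_nonneg hτ ht]

/-- In the application `U`, `W`, `N`, `G` are the norms of the error `u` and of its restrictions to
the selected indices, to the large missed entries and to the small ones, `P` is the lower bound
`√|S| a` for `N`, and `e` is the contribution of the noise. -/
theorem error_le_three_mul {U W N G P e : ℝ} (hτ : 0 < τ) (hτ₃ : 3 * τ ≤ 1)
    (hU : U ≤ W + N + G) (hW : W ≤ τ ^ 2 * U + e) (hG : τ * G ≤ P) (hP : 0 ≤ P) (hPN : P ≤ N)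
    (he : e ≤ (1 + τ ^ 2) * (τ * P)) : τ ^ 2 * U + e ≤ 3 * τ * N := by
  have hN : 0 ≤ N := hP.trans hPN
  have hδ : 0 < 1 - τ ^ 2 := by nlinarith
  have habsorb : (1 - τ ^ 2) * (τ ^ 2 * U + e) ≤ τ ^ 2 * N + τ * P + e := by
    nlinarith [mul_le_mul_of_nonneg_left hU (sq_nonneg τ),
      mul_le_mul_of_nonneg_left hW (sq_nonneg τ), mul_le_mul_of_nonneg_left hG hτ.le]
  refine le_of_mul_le_mul_left ?_ hδ
  calc (1 - τ ^ 2) * (τ ^ 2 * U + e) ≤ τ ^ 2 * N + τ * N + (1 + τ ^ 2) * (τ * N) := by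
        refine habsorb.trans (by gcongr; exact he.trans (by gcongr))
    _ = τ * N * (2 + τ + τ ^ 2) := by ring
    _ ≤ τ * N * (3 * (1 - τ ^ 2)) := by gcongr; nlinarith
    _ = (1 - τ ^ 2) * (3 * τ * N) := by ring

theorem one_add_sq_mul_le_sq {M : ℝ} (hτ : 0 ≤ τ) (hτ₃ : 3 * τ ≤ 1) (ha : 0 ≤ a)
    (h : (1 - 3 * τ) * a ≤ M) : (1 + τ ^ 2) * ((1 - 7 * τ) * a ^ 2) ≤ M ^ 2 :=
  calc (1 + τ ^ 2) * ((1 - 7 * τ) * a ^ 2) = (1 + τ ^ 2) * (1 - 7 * τ) * a ^ 2 := by ring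
    _ ≤ (1 - 3 * τ) ^ 2 * a ^ 2 := by gcongr; nlinarith [pow_nonneg hτ 3]
    _ = ((1 - 3 * τ) * a) ^ 2 := by ring
    _ ≤ M ^ 2 := pow_le_pow_left₀ (mul_nonneg (by linarith) ha) h 2

theorem HasRIP.noise_le {K : ℕ} {κ s : ℝ} (hΦ : HasRIP Φ L (τ ^ 2)) (hτ : 0 ≤ τ) (ha : 0 ≤ a)
    (hκ : 0 < κ) (hK : #(suppF x) ≤ K) (hL : #(suppF x) ≤ L) (hx : ∀ i ∈ suppF x, |x i| ≤ κ * a)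
    (hv : κ ^ 2 * ‖v‖ ^ 2 ≤ τ ^ 3 * ‖mulVec' Φ x‖ ^ 2) (hs : τ * K ≤ s) :
    √(1 + τ ^ 2) * ‖v‖ ≤ (1 + τ ^ 2) * (τ * (√s * a)) := by
  have hs₀ : 0 ≤ s := le_trans (by positivity) hs
  have hmem : x ∈ supportedOn (suppF x) := mem_supportedOn_iff_suppF_subset.2 subset_rfl
  have hnorm : ‖x‖ ^ 2 ≤ K * (κ * a) ^ 2 := by
    have h := norm_restrict_le_sqrt_card_mul (by positivity) hx
    rw [restrict_eq_self hmem] at h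
    calc ‖x‖ ^ 2 ≤ (√(#(suppF x)) * (κ * a)) ^ 2 := by gcongr
      _ = #(suppF x) * (κ * a) ^ 2 := by rw [mul_pow, Real.sq_sqrt (by positivity)]
      _ ≤ K * (κ * a) ^ 2 := by gcongr
  have hcancel : κ ^ 2 * ‖v‖ ^ 2 ≤ κ ^ 2 * ((1 + τ ^ 2) * (τ ^ 2 * (s * a ^ 2))) :=
    calc κ ^ 2 * ‖v‖ ^ 2 ≤ τ ^ 3 * ‖mulVec' Φ x‖ ^ 2 := hv
      _ ≤ τ ^ 3 * ((1 + τ ^ 2) * ‖x‖ ^ 2) := by gcongr; exact hΦ.norm_sq_mulVec'_le hmem hL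
      _ ≤ τ ^ 3 * ((1 + τ ^ 2) * (K * (κ * a) ^ 2)) := by gcongr
      _ = κ ^ 2 * ((1 + τ ^ 2) * (τ ^ 2 * (τ * K * a ^ 2))) := by ring
      _ ≤ κ ^ 2 * ((1 + τ ^ 2) * (τ ^ 2 * (s * a ^ 2))) := by gcongr
  refine le_of_sq_le_sq ?_ (by positivity)
  calc (√(1 + τ ^ 2) * ‖v‖) ^ 2 = (1 + τ ^ 2) * ‖v‖ ^ 2 := by
        rw [mul_pow, Real.sq_sqrt (by positivity)]
    _ ≤ (1 + τ ^ 2) * ((1 + τ ^ 2) * (τ ^ 2 * (s * a ^ 2))) := by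
        gcongr
        exact le_of_mul_le_mul_left hcancel (by positivity)
    _ = ((1 + τ ^ 2) * (τ * (√s * a))) ^ 2 := by
        simp only [mul_pow, Real.sq_sqrt hs₀]
        ring

theorem HasRIP.one_sub_three_mul_le {M : ℝ} (hΦ : HasRIP Φ L (τ ^ 2)) (hτ : 0 < τ)
    (hτ₃ : 3 * τ ≤ 1) (ha : 0 ≤ a) (hu : u ∈ supportedOn (A ∪ Γ)) (hL : #(A ∪ Γ) ≤ L)
    (hSΓ : S ⊆ Γ) (hSne : S.Nonempty) (hlarge : ∀ i ∈ S, a ≤ |u i|)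
    (hsmall : ∀ i ∈ Γ \ S, |u i| ≤ a) (hcard : τ * #Γ ≤ #S)
    (hv : √(1 + τ ^ 2) * ‖v‖ ≤ (1 + τ ^ 2) * (τ * (√(#S) * a)))
    (horth : ⟪mulVec' Φ (restrict u A), mulVec' Φ u + v⟫ = 0)
    (hM : ∀ i ∈ S, |dot (col Φ i) (mulVec' Φ u + v)| ≤ M) : (1 - 3 * τ) * a ≤ M := by
  have hM₀ : 0 ≤ M := hSne.elim fun i hi ↦ (abs_nonneg _).trans (hM i hi)
  have hS₀ : 0 < √(#S : ℝ) := Real.sqrt_pos.2 (by exact_mod_cast hSne.card_pos)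
  have hPN : √(#S) * a ≤ ‖restrict u S‖ := sqrt_card_mul_le_norm_restrict ha hlarge
  have hselected : ‖restrict u A‖ ≤ τ ^ 2 * ‖u‖ + √(1 + τ ^ 2) * ‖v‖ := by
    simpa using hΦ.norm_restrict_le_add (sq_nonneg τ) hL hu Finset.subset_union_left le_rfl
      (horth.le.trans_eq (zero_mul _).symm)
  have htail : τ * ‖restrict u (Γ \ S)‖ ≤ √(#S) * a :=
    calc τ * ‖restrict u (Γ \ S)‖ ≤ τ * (√(#Γ) * a) := by
          gcongr
          refine (norm_restrict_le_sqrt_card_mul ha hsmall).trans ?_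
          gcongr
          exact Finset.sdiff_subset
      _ = τ * √(#Γ) * a := by ring
      _ ≤ √(#S) * a := by
          gcongr
          exact mul_sqrt_le_sqrt_of_mul_le hτ.le (by linarith) (by positivity) hcard
  have hsplit : ‖u‖ ≤ ‖restrict u A‖ + ‖restrict u S‖ + ‖restrict u (Γ \ S)‖ := by
    have hAΓ := norm_restrict_union_le u A Γ
    have hΓ := norm_restrict_union_le u S (Γ \ S)
    rw [restrict_eq_self hu] at hAΓ
    rw [Finset.union_sdiff_of_subset hSΓ] at hΓ
    linarith
  have herror := error_le_three_mul hτ hτ₃ hsplit hselected htail (by positivity) hPN hv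
  have hcorr := hΦ.norm_restrict_le_add (sq_nonneg τ) hL hu (hSΓ.trans Finset.subset_union_right)
    (by positivity) (inner_mulVec'_restrict_le u hM₀ hM)
  refine le_of_mul_le_mul_left ?_ hS₀
  calc √(#S) * ((1 - 3 * τ) * a) = (1 - 3 * τ) * (√(#S) * a) := by ring
    _ ≤ (1 - 3 * τ) * ‖restrict u S‖ := mul_le_mul_of_nonneg_left hPN (by linarith)
    _ ≤ √(#S) * M := by linarith

end Greedy

namespace OMPRun

variable {m n N k l : ℕ} {Φ : Matrix (Fin m) (Fin n) ℝ} {x w : Vec n} {v y : Vec m}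

theorem card_sets_le (run : OMPRun Φ y N) (hk : k ≤ N) : #(run.sets k) ≤ k := by
  induction k with
  | zero => simp [run.sets_zero]
  | succ k ih =>
    rw [run.sets_succ k hk]
    exact (Finset.card_insert_le _ _).trans (Nat.succ_le_succ (ih (by omega)))

theorem est_mem_supportedOn (run : OMPRun Φ y N) (hk : k ≤ N) :
    run.est k ∈ supportedOn (run.sets k) := by
  cases k with
  | zero => exact run.est_zero ▸ zero_mem _
  | succ k => exact mem_supportedOn_iff_suppF_subset.2 (run.est_supp k hk)

theorem res_eq (run : OMPRun Φ y N) (hk : k ≤ N) : run.res k = y - mulVec' Φ (run.est k) := by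
  cases k with
  | zero => simp [run.res_zero, run.est_zero, mulVec'_eq_toEuclideanLin]
  | succ k => exact run.res_succ k hk

theorem norm_res_le (run : OMPRun Φ y N) (hk : k ≤ N) (hw : w ∈ supportedOn (run.sets k)) :
    ‖run.res k‖ ≤ ‖y - mulVec' Φ w‖ := by
  cases k with
  | zero =>
    have hw₀ : w = 0 := by
      ext i
      exact hw i (by simp [run.sets_zero])
    simp [run.res_zero, hw₀, mulVec'_eq_toEuclideanLin]
  | succ k =>
    rw [run.res_succ k hk]
    exact run.est_min k hk w (mem_supportedOn_iff_suppF_subset.1 hw)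

theorem sq_inner_mulVec'_res_le (run : OMPRun Φ y N) (hk : k ≤ N) (hl : l ≤ N)
    (hkl : run.sets k ⊆ run.sets l) (hw : w ∈ supportedOn (run.sets l)) :
    ⟪mulVec' Φ w, run.res k⟫ ^ 2 ≤ ‖mulVec' Φ w‖ ^ 2 * (‖run.res k‖ ^ 2 - ‖run.res l‖ ^ 2) := by
  refine sq_inner_le_of_forall_le_norm_sub_smul (norm_nonneg _) fun c ↦ ?_
  have hres : run.res k - c • mulVec' Φ w = y - mulVec' Φ (run.est k + c • w) := by
    rw [run.res_eq hk]
    simp only [mulVec'_eq_toEuclideanLin, map_add, map_smul, sub_sub]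
  rw [hres]
  exact run.norm_res_le hl
    (add_mem (supportedOn_mono hkl (run.est_mem_supportedOn hk)) (Submodule.smul_mem _ c hw))

theorem inner_mulVec'_res_eq_zero (run : OMPRun Φ y N) (hk : k ≤ N)
    (hw : w ∈ supportedOn (run.sets k)) : ⟪mulVec' Φ w, run.res k⟫ = 0 := by
  have h := run.sq_inner_mulVec'_res_le hk hk subset_rfl hw
  rw [sub_self, mul_zero] at h
  exact pow_eq_zero_iff two_ne_zero |>.1 (h.antisymm (sq_nonneg _))

theorem sets_subset_succ (run : OMPRun Φ y N) (hk : k < N) : run.sets k ⊆ run.sets (k + 1) :=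
  run.sets_succ k hk ▸ Finset.subset_insert _ _

theorem norm_res_succ_le (run : OMPRun Φ y N) (hk : k < N) :
    ‖run.res (k + 1)‖ ≤ ‖run.res k‖ := by
  rw [run.res_eq hk.le]
  exact run.norm_res_le hk
    (supportedOn_mono (run.sets_subset_succ hk) (run.est_mem_supportedOn hk.le))

theorem sq_dot_col_idx_le (run : OMPRun Φ y N) (hk : k < N) :
    dot (col Φ (run.idx (k + 1))) (run.res k) ^ 2 ≤
      ‖col Φ (run.idx (k + 1))‖ ^ 2 * (‖run.res k‖ ^ 2 - ‖run.res (k + 1)‖ ^ 2) := by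
  have hmem : run.idx (k + 1) ∈ run.sets (k + 1) :=
    run.sets_succ k hk ▸ Finset.mem_insert_self _ _
  simpa only [dot_eq_inner, mulVec'_single_one] using
    run.sq_inner_mulVec'_res_le hk.le hk (run.sets_subset_succ hk) (single_mem_supportedOn hmem 1)

theorem res_eq_mulVec'_sub_est_add (run : OMPRun Φ y N) (hk : k ≤ N)
    (hy : y = mulVec' Φ x + v) : run.res k = mulVec' Φ (x - run.est k) + v := by
  have hyv : mulVec' Φ x = y - v := eq_sub_of_add_eq hy.symm
  rw [run.res_eq hk, mulVec'_eq_toEuclideanLin (x - run.est k), map_sub,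
    ← mulVec'_eq_toEuclideanLin, ← mulVec'_eq_toEuclideanLin, hyv]
  abel

theorem sub_est_apply_of_notMem (run : OMPRun Φ y N) (hk : k ≤ N) (x : Vec n) {i : Fin n}
    (hi : i ∉ run.sets k) : (x - run.est k) i = x i := by
  simp [run.est_mem_supportedOn hk i hi]

theorem sub_est_mem_supportedOn (run : OMPRun Φ y N) (hk : k ≤ N) (x : Vec n) :
    x - run.est k ∈ supportedOn (run.sets k ∪ suppF x \ run.sets k) := by
  rw [Finset.union_sdiff_self_eq_union]
  exact sub_mem
    (supportedOn_mono Finset.subset_union_right (mem_supportedOn_iff_suppF_subset.2 subset_rfl))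
    (supportedOn_mono Finset.subset_union_left (run.est_mem_supportedOn hk))

theorem one_sub_three_mul_kthLargest_le {K j : ℕ} {τ κ : ℝ} (run : OMPRun Φ y N)
    (hΦ : HasRIP Φ (2 * K) (τ ^ 2)) (hτ : 0 < τ) (hτ₃ : 3 * τ ≤ 1) (hK : #(suppF x) ≤ K)
    (hκ : ∀ i ∈ suppF x, ∀ i' ∈ suppF x, |x i| ≤ κ * |x i'|) (hy : y = mulVec' Φ x + v)
    (hv : κ ^ 2 * ‖v‖ ^ 2 ≤ τ ^ 3 * ‖mulVec' Φ x‖ ^ 2) (hkK : k ≤ K) (hkN : k < N)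
    (hj₁ : 1 ≤ j) (hj : j ≤ #(suppF x \ run.sets k)) (hτj : τ * K ≤ j) :
    (1 - 3 * τ) * kthLargest x (suppF x \ run.sets k) j ≤
      |dot (col Φ (run.idx (k + 1))) (run.res k)| := by
  set Γ := suppF x \ run.sets k
  set a := kthLargest x Γ j
  obtain ⟨i₀, hi₀, hai₀⟩ : ∃ i ∈ Γ, |x i| = a := exists_abs_eq_kthLargest x hj₁ hj
  have hjS : j ≤ #{i ∈ Γ | a ≤ |x i|} := le_card_filter_kthLargest_le x hj
  have hi₀x := (Finset.mem_sdiff.1 hi₀).1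
  have ha : 0 < a := hai₀ ▸ abs_pos.2 (Finset.mem_filter.1 hi₀x).2
  have hxa (i) (hi : i ∈ suppF x) : |x i| ≤ κ * a := hai₀ ▸ hκ i hi i₀ hi₀x
  have hκ₀ : 0 < κ := pos_of_mul_pos_left (ha.trans_le (hai₀ ▸ hxa i₀ hi₀x)) ha.le
  have hτS : τ * K ≤ #{i ∈ Γ | a ≤ |x i|} := hτj.trans (by exact_mod_cast hjS)
  have hΓK : #Γ ≤ K := (Finset.card_le_card Finset.sdiff_subset).trans hK
  have hunion : #(run.sets k ∪ Γ) ≤ 2 * K := by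
    have hsets := run.card_sets_le hkN.le
    have hle := Finset.card_union_le (run.sets k) Γ
    omega
  have huΓ : ∀ i ∈ Γ, (x - run.est k) i = x i := fun i hi ↦
    run.sub_est_apply_of_notMem hkN.le x (Finset.mem_sdiff.1 hi).2
  have hres := run.res_eq_mulVec'_sub_est_add hkN.le hy
  refine hΦ.one_sub_three_mul_le hτ hτ₃ ha.le (run.sub_est_mem_supportedOn hkN.le x) hunion
    (Finset.filter_subset _ _) (Finset.card_pos.1 (hj₁.trans hjS))
    (fun i hi ↦ ?large) (fun i hi ↦ ?small) (le_trans (by gcongr) hτS)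
    (hΦ.noise_le hτ.le ha.le hκ₀ hK (by omega) hxa hv hτS)
    (hres ▸ run.inner_mulVec'_res_eq_zero hkN.le (restrict_mem_supportedOn _ _))
    (fun i hi ↦ hres ▸ run.idx_max k hkN i (Finset.mem_sdiff.1 (Finset.mem_filter.1 hi).1).2)
  case large =>
    obtain ⟨hiΓ, hai⟩ := Finset.mem_filter.1 hi
    rwa [huΓ i hiΓ]
  case small =>
    obtain ⟨hiΓ, hiS⟩ := Finset.mem_sdiff.1 hi
    rw [huΓ i hiΓ]
    exact le_of_not_ge fun h ↦ hiS (Finset.mem_filter.2 ⟨hiΓ, h⟩)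

end OMPRun

theorem abs_le_sup'_abs_div_abs_mul {ι : Type*} {x : ι → ℝ} {T : Finset ι} (hT : (T ×ˢ T).Nonempty)
    (hx : ∀ i ∈ T, x i ≠ 0) {i j : ι} (hi : i ∈ T) (hj : j ∈ T) :
    |x i| ≤ (T ×ˢ T).sup' hT (fun p ↦ |x p.1| / |x p.2|) * |x j| := by
  rw [← div_le_iff₀ (abs_pos.2 (hx j hj))]
  exact Finset.le_sup' (fun p : ι × ι ↦ |x p.1| / |x p.2|) (Finset.mk_mem_product hi hj)

theorem mul_norm_sq_le_of_le_SNR {m n : ℕ} {Φ : Matrix (Fin m) (Fin n) ℝ} {x : Vec n} {v : Vec m}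
    {δ c : ℝ} (hδ : 0 < δ) (hv : v ≠ 0) (h : c * δ ^ (-(3 : ℝ) / 2) ≤ SNR Φ x v) :
    c * ‖v‖ ^ 2 ≤ √δ ^ 3 * ‖mulVec' Φ x‖ ^ 2 := by
  have hpow : δ ^ (-(3 : ℝ) / 2) = (√δ ^ 3)⁻¹ := by
    rw [Real.sqrt_eq_rpow, ← Real.rpow_mul_natCast hδ.le, ← Real.rpow_neg hδ.le]
    norm_num
  have hv' : 0 < ‖v‖ ^ 2 := by positivity
  have hδ' : 0 < √δ ^ 3 := by positivity
  rw [SNR, hpow, le_div_iff₀ hv'] at h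
  calc c * ‖v‖ ^ 2 = √δ ^ 3 * (c * (√δ ^ 3)⁻¹ * ‖v‖ ^ 2) := by field
    _ ≤ √δ ^ 3 * ‖mulVec' Φ x‖ ^ 2 := by gcongr

theorem stmt7_general {m n K N k : ℕ} {Φ : Matrix (Fin m) (Fin n) ℝ} {τ κ : ℝ} {x : Vec n}
    {v y : Vec m} (hΦ : HasRIP Φ (2 * K) (τ ^ 2)) (hτ : 0 < τ) (hK : #(suppF x) ≤ K)
    (hκ : ∀ i ∈ suppF x, ∀ i' ∈ suppF x, |x i| ≤ κ * |x i'|) (hy : y = mulVec' Φ x + v)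
    (hv : κ ^ 2 * ‖v‖ ^ 2 ≤ τ ^ 3 * ‖mulVec' Φ x‖ ^ 2) (run : OMPRun Φ y N) (hkK : k ≤ K)
    (hkN : k < N) :
    (1 - 7 * τ) * (kthLargest x (suppF x \ run.sets k) ⌈τ * K⌉₊) ^ 2 ≤
      ‖run.res k‖ ^ 2 - ‖run.res (k + 1)‖ ^ 2 := by
  set Γ := suppF x \ run.sets k
  have hdecr : 0 ≤ ‖run.res k‖ ^ 2 - ‖run.res (k + 1)‖ ^ 2 :=
    sub_nonneg.2 (pow_le_pow_left₀ (norm_nonneg _) (run.norm_res_succ_le hkN) 2)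
  by_cases hj : 1 ≤ ⌈τ * K⌉₊ ∧ ⌈τ * K⌉₊ ≤ #Γ
  swap
  · simpa [kthLargest_eq_zero x hj] using hdecr
  rcases le_total 1 (7 * τ) with hτ₇ | hτ₇
  · exact (mul_nonpos_of_nonpos_of_nonneg (by linarith) (sq_nonneg _)).trans hdecr
  have hK₁ : 1 ≤ K :=
    hj.1.trans (hj.2.trans ((Finset.card_le_card Finset.sdiff_subset).trans hK))
  have hgreedy := run.one_sub_three_mul_kthLargest_le hΦ hτ (by linarith) hK hκ hy hv hkK hkN
    hj.1 hj.2 (Nat.le_ceil _)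
  have hδ : 0 < 1 + τ ^ 2 := by positivity
  refine le_of_mul_le_mul_left ?_ hδ
  calc (1 + τ ^ 2) * ((1 - 7 * τ) * kthLargest x Γ ⌈τ * K⌉₊ ^ 2)
    _ ≤ |dot (col Φ (run.idx (k + 1))) (run.res k)| ^ 2 :=
        one_add_sq_mul_le_sq hτ.le (by linarith) (kthLargest_nonneg _ _ _) hgreedy
    _ = dot (col Φ (run.idx (k + 1))) (run.res k) ^ 2 := sq_abs _
    _ ≤ ‖col Φ (run.idx (k + 1))‖ ^ 2 * (‖run.res k‖ ^ 2 - ‖run.res (k + 1)‖ ^ 2) :=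
        run.sq_dot_col_idx_le hkN
    _ ≤ (1 + τ ^ 2) * (‖run.res k‖ ^ 2 - ‖run.res (k + 1)‖ ^ 2) := by
        gcongr
        exact hΦ.norm_sq_col_le (by omega) _

/-- per-iteration reduction of the residual energy:
`‖r^k‖² − ‖r^{k+1}‖² ≥ (1 − 7τ)(x_τ^k)²` for `0 ≤ k ≤ K − ⌈τK⌉`, `τ = δ^{1/2}`. -/
theorem stmt7 {m n K : ℕ} (Φ : Matrix (Fin m) (Fin n) ℝ) (δ : ℝ)
    (x : Vec n) (v y : Vec m) (T : Finset (Fin n)) (hTne : T.Nonempty)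
    (hsupp : suppF x = T) (hcard : T.card = K) (hK1 : 1 ≤ K)
    (hRIP : RIPConst Φ (2 * K) δ) (h0 : 0 < δ) (h1 : δ < 1)
    (hv : v ≠ 0) (hy : y = mulVec' Φ x + v)
    (hSNR : SNR Φ x v ≥
      (((T ×ˢ T).sup' (hTne.product hTne) fun p => |x p.1| / |x p.2|)) ^ 2
        * δ ^ (-(3 : ℝ) / 2))
    (run : OMPRun Φ y K) :
    ∀ k : ℕ, k ≤ K - ⌈Real.sqrt δ * K⌉₊ →
      (1 - 7 * Real.sqrt δ) *
          (kthLargest x (T \ run.sets k) ⌈Real.sqrt δ * K⌉₊) ^ 2 ≤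
        ‖run.res k‖ ^ 2 - ‖run.res (k + 1)‖ ^ 2 := by
  intro k hk
  subst hsupp
  have hceil : 0 < ⌈√δ * K⌉₊ := Nat.ceil_pos.2 (by positivity)
  exact stmt7_general (by rw [Real.sq_sqrt h0.le]; exact hRIP.1.2) (Real.sqrt_pos.2 h0) hcard.le
    (fun i hi j hj ↦ abs_le_sup'_abs_div_abs_mul (hTne.product hTne)
      (fun _ hl ↦ (Finset.mem_filter.1 hl).2) hi hj)
    hy (mul_norm_sq_le_of_le_SNR h0 hv hSNR) run (by omega) (by omega)

end
end

section
/- Let Φ ∈ ℝ^{m×n} have restricted isometry constant δ_{K+1} of order K+1, let x ∈ ℝ^n be K-sparse with support T, |T| = K ≥ 1, and let y = Φx + v with v ≠ 0. Then for every subset S ⊆ T with |S| = k ≤ K, the restriction of x to T\S satisfies ‖x_{T\S}‖₂ ≥ √((K − k)/(K(1 + δ_{K+1}))) · √(MAR · SNR) · ‖v‖₂. -/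
noncomputable section
open Finset

/-! Each entry of `x` indexed by `R ⊆ T` has square at least
`min_{j ∈ T} |x_j|² = MAR · ‖x‖² / |T|`, so `‖x_R‖² ≥ (|R| / |T|) · MAR · ‖x‖²`. The upper
restricted isometry inequality, at the single vector `x`, bounds `‖x‖²` below by
`‖Φx‖² / (1 + δ) = SNR · ‖v‖² / (1 + δ)`. The theorem is the case `R = T \ S`. -/

theorem suppF_nonempty_iff {n : ℕ} {x : Vec n} : (suppF x).Nonempty ↔ x ≠ 0 := by
  simp [suppF, filter_nonempty_iff, PiLp.ext_iff]

theorem norm_restrict_sq {n : ℕ} (x : Vec n) (R : Finset (Fin n)) :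
    ‖restrict x R‖ ^ 2 = ∑ i ∈ R, |x i| ^ 2 := by
  simp [EuclideanSpace.real_norm_sq_eq, _root_.restrict, ite_pow]

theorem card_mul_le_norm_restrict_sq {n : ℕ} {x : Vec n} {R : Finset (Fin n)} {c : ℝ}
    (hc : ∀ i ∈ R, c ≤ |x i| ^ 2) : #R * c ≤ ‖restrict x R‖ ^ 2 := by
  rw [norm_restrict_sq, ← nsmul_eq_mul]
  exact card_nsmul_le_sum R _ c hc

/-- The minimum-to-average ratio `(min_{j ∈ T} |x_j|²) / (‖x‖² / |T|)` of the squared entries of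
`x`. It is the paper's `MAR` when `T` is the support of `x`; the index set is left free because the
lower bounds on restrictions of `x` hold for every nonempty `T`. -/
def MAR {n : ℕ} (x : Vec n) (T : Finset (Fin n)) (hT : T.Nonempty) : ℝ :=
  (T.inf' hT fun j => |x j| ^ 2) / (‖x‖ ^ 2 / #T)

section MAR

variable {n : ℕ} {x : Vec n} {T : Finset (Fin n)} (hT : T.Nonempty)

theorem MAR_nonneg : 0 ≤ MAR x T hT :=
  div_nonneg (le_inf' hT _ fun _ _ => sq_nonneg _) (by positivity)

theorem MAR_mul_norm_sq_div_card (hx : x ≠ 0) :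
    MAR x T hT * (‖x‖ ^ 2 / #T) = T.inf' hT fun j => |x j| ^ 2 :=
  div_mul_cancel₀ _ (div_ne_zero (by simpa using hx) (by simpa using hT.ne_empty))

theorem card_div_card_mul_MAR_le_norm_restrict_sq (hx : x ≠ 0) {R : Finset (Fin n)} (hR : R ⊆ T) :
    #R / #T * MAR x T hT * ‖x‖ ^ 2 ≤ ‖restrict x R‖ ^ 2 :=
  calc #R / #T * MAR x T hT * ‖x‖ ^ 2
      = #R * (MAR x T hT * (‖x‖ ^ 2 / #T)) := by ring
    _ = #R * T.inf' hT fun j => |x j| ^ 2 := by rw [MAR_mul_norm_sq_div_card hT hx]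
    _ ≤ ‖restrict x R‖ ^ 2 :=
      card_mul_le_norm_restrict_sq fun _ hi => inf'_le (fun j => |x j| ^ 2) (hR hi)

end MAR

section SNR

variable {m n : ℕ} (Φ : Matrix (Fin m) (Fin n) ℝ) (x : Vec n)

theorem SNR_nonneg (v : Vec m) : 0 ≤ SNR Φ x v :=
  div_nonneg (sq_nonneg _) (sq_nonneg _)

theorem SNR_mul_norm_sq {v : Vec m} (hv : v ≠ 0) : SNR Φ x v * ‖v‖ ^ 2 = ‖mulVec' Φ x‖ ^ 2 :=
  div_mul_cancel₀ _ (by simpa using hv)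

end SNR

namespace RIPConst

variable {m n L : ℕ} {Φ : Matrix (Fin m) (Fin n) ℝ} {δ : ℝ}

theorem one_add_pos (h : RIPConst Φ L δ) : 0 < 1 + δ :=
  add_pos_of_pos_of_nonneg one_pos h.1.1

theorem norm_mulVec'_sq_le (h : RIPConst Φ L δ) {u : Vec n} (hu : #(suppF u) ≤ L) :
    ‖mulVec' Φ u‖ ^ 2 ≤ (1 + δ) * ‖u‖ ^ 2 :=
  (h.1.2 u hu).2

end RIPConst

theorem stmt15_general {m n : ℕ} (Φ : Matrix (Fin m) (Fin n) ℝ) {δ : ℝ} (hδ : 0 < 1 + δ)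
    {x : Vec n} (hx : x ≠ 0) (hΦx : ‖mulVec' Φ x‖ ^ 2 ≤ (1 + δ) * ‖x‖ ^ 2)
    {v : Vec m} (hv : v ≠ 0) {R T : Finset (Fin n)} (hT : T.Nonempty) (hR : R ⊆ T) :
    √(#R / (#T * (1 + δ))) * √(MAR x T hT * SNR Φ x v) * ‖v‖ ≤ ‖restrict x R‖ := by
  have hMAR : 0 ≤ MAR x T hT := MAR_nonneg hT
  have hMS : 0 ≤ MAR x T hT * SNR Φ x v := mul_nonneg hMAR (SNR_nonneg Φ x v)
  refine (sq_le_sq₀ (by positivity) (norm_nonneg _)).1 ?_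
  calc (√(#R / (#T * (1 + δ))) * √(MAR x T hT * SNR Φ x v) * ‖v‖) ^ 2
      = #R / (#T * (1 + δ)) * (MAR x T hT * SNR Φ x v) * ‖v‖ ^ 2 := by
        rw [mul_pow, mul_pow, Real.sq_sqrt (by positivity), Real.sq_sqrt hMS]
    _ = #R / #T * MAR x T hT * (SNR Φ x v * ‖v‖ ^ 2 / (1 + δ)) := by
        rw [← div_div]
        ring
    _ = #R / #T * MAR x T hT * (‖mulVec' Φ x‖ ^ 2 / (1 + δ)) := by rw [SNR_mul_norm_sq Φ x hv]
    _ ≤ #R / #T * MAR x T hT * ‖x‖ ^ 2 := by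
        gcongr
        exact (div_le_iff₀' hδ).2 hΦx
    _ ≤ ‖restrict x R‖ ^ 2 := card_div_card_mul_MAR_le_norm_restrict_sq hT hx hR

/-- lower bound on `‖x_{T\S}‖` in terms of `MAR`, `SNR` and `‖v‖`. -/
theorem stmt15 {m n K k : ℕ} (Φ : Matrix (Fin m) (Fin n) ℝ) (δ : ℝ)
    (x : Vec n) (v y : Vec m) (T : Finset (Fin n)) (hTne : T.Nonempty)
    (hsupp : suppF x = T) (hcard : T.card = K) (hK1 : 1 ≤ K)
    (hRIP : RIPConst Φ (K + 1) δ)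
    (hv : v ≠ 0) (hy : y = mulVec' Φ x + v)
    (S : Finset (Fin n)) (hS : S ⊆ T) (hk : S.card = k) :
    Real.sqrt (((K : ℝ) - k) / (K * (1 + δ))) *
        Real.sqrt (((T.inf' hTne fun j => |x j| ^ 2) / (‖x‖ ^ 2 / K)) * SNR Φ x v) *
        ‖v‖ ≤
      ‖restrict x (T \ S)‖ := by
  subst hsupp hcard hk
  rw [← cast_card_sdiff hS]
  exact stmt15_general Φ hRIP.one_add_pos (suppF_nonempty_iff.1 hTne)
    (hRIP.norm_mulVec'_sq_le (Nat.le_succ _)) hv hTne sdiff_subset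

end
end

section
/- Let Φ ∈ ℝ^{m×n} have restricted isometry constant δ_K < 1 of order K, and let S₁, S₂ ⊆ {1,…,n} be disjoint index sets with |S₁| + |S₂| ≤ K such that Φ_{S₂} has full column rank. Then for every vector w ∈ ℝ^m, ‖Φᵀ_{S₁} P⊥_{S₂} w‖₂ ≤ √(1 + δ_K)·‖w‖₂, where P_{S₂} = Φ_{S₂} Φ_{S₂}^† is the orthogonal projection onto the column span of Φ_{S₂} and P⊥_{S₂} = I − P_{S₂}. -/
noncomputable section
open Finset

/-! `colDots Φ S` is adjoint to the restriction of `Φ` to vectors supported in `S`, so it inherits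
any bound `‖Φ u‖ ≤ c * ‖u‖` on those vectors: for `u = colDots Φ S z`,
`‖u‖² = ⟪u, colDots Φ S z⟫ = ⟪Φ u, z⟫ ≤ c * ‖u‖ * ‖z‖`. Restricted isometry supplies `c = √(1 + δ)`,
and passing from `w` to `z = P⊥ w` does not increase the norm. -/

section

variable {m n : ℕ} (Φ : Matrix (Fin m) (Fin n) ℝ)

lemma inner_eq_dot (u v : Vec n) : inner ℝ u v = dot u v := by
  simp only [PiLp.inner_apply, RCLike.inner_apply, conj_trivial, dot, mul_comm]

lemma dot_mulVec'_left (u : Vec n) (z : Vec m) :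
    dot (mulVec' Φ u) z = ∑ j, u j * dot (col Φ j) z := by
  simp only [dot, mulVec', col, Finset.sum_mul, Finset.mul_sum]
  rw [Finset.sum_comm]
  refine Finset.sum_congr rfl fun j _ => Finset.sum_congr rfl fun i _ => ?_
  ring

lemma suppF_colDots_subset (S : Finset (Fin n)) (z : Vec m) : suppF (colDots Φ S z) ⊆ S := by
  intro i hi
  by_contra hiS
  simp [suppF, colDots, hiS] at hi

lemma inner_colDots_right {S : Finset (Fin n)} {u : Vec n} (hu : suppF u ⊆ S) (z : Vec m) :
    inner ℝ u (colDots Φ S z) = inner ℝ (mulVec' Φ u) z := by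
  rw [inner_eq_dot, inner_eq_dot, dot_mulVec'_left]
  refine Finset.sum_congr rfl fun j _ => ?_
  by_cases hj : j ∈ S
  · simp [colDots, hj]
  · have huj : u j = 0 := by
      by_contra h
      exact hj (hu (by simpa [suppF] using h))
    simp [huj]

lemma norm_perpProj_le (S : Finset (Fin n)) (w : Vec m) : ‖perpProj Φ S w‖ ≤ ‖w‖ := by
  rw [perpProj, ← Submodule.starProjection_apply, ← Submodule.starProjection_orthogonal_val]
  exact Submodule.norm_starProjection_apply_le _ w

variable {Φ}

lemma norm_colDots_le {S : Finset (Fin n)} {c : ℝ} (hc : 0 ≤ c)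
    (hΦ : ∀ u : Vec n, suppF u ⊆ S → ‖mulVec' Φ u‖ ≤ c * ‖u‖) (z : Vec m) :
    ‖colDots Φ S z‖ ≤ c * ‖z‖ := by
  set u := colDots Φ S z
  have hu : suppF u ⊆ S := suppF_colDots_subset Φ S z
  have key : ‖u‖ * ‖u‖ ≤ c * ‖z‖ * ‖u‖ :=
    calc ‖u‖ * ‖u‖ = inner ℝ u u := (real_inner_self_eq_norm_mul_norm u).symm
      _ = inner ℝ (mulVec' Φ u) z := inner_colDots_right Φ hu z
      _ ≤ ‖mulVec' Φ u‖ * ‖z‖ := real_inner_le_norm _ _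
      _ ≤ c * ‖u‖ * ‖z‖ := by gcongr; exact hΦ u hu
      _ = c * ‖z‖ * ‖u‖ := by ring
  rcases (norm_nonneg u).eq_or_lt with hu₀ | hu₀
  · rw [← hu₀]
    positivity
  · exact le_of_mul_le_mul_right key hu₀

theorem stmt17_general {S₁ : Finset (Fin n)} {c : ℝ}
    (hΦ : ∀ u : Vec n, suppF u ⊆ S₁ → ‖mulVec' Φ u‖ ^ 2 ≤ c * ‖u‖ ^ 2)
    (S₂ : Finset (Fin n)) (w : Vec m) :
    ‖colDots Φ S₁ (perpProj Φ S₂ w)‖ ≤ √c * ‖w‖ := by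
  have hΦ' (u : Vec n) (hu : suppF u ⊆ S₁) : ‖mulVec' Φ u‖ ≤ √c * ‖u‖ := by
    simpa only [Real.sqrt_mul' c (sq_nonneg ‖u‖), Real.sqrt_sq (norm_nonneg u)]
      using Real.le_sqrt_of_sq_le (hΦ u hu)
  calc ‖colDots Φ S₁ (perpProj Φ S₂ w)‖
      ≤ √c * ‖perpProj Φ S₂ w‖ := norm_colDots_le (Real.sqrt_nonneg c) hΦ' _
    _ ≤ √c * ‖w‖ := by gcongr; exact norm_perpProj_le Φ S₂ w

end

/-- `‖Φᵀ_{S₁} P⊥_{S₂} w‖ ≤ √(1 + δ_K)‖w‖` for disjoint `S₁, S₂`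
with `|S₁| + |S₂| ≤ K` and `Φ_{S₂}` of full column rank. -/
theorem stmt17 {m n K : ℕ} (Φ : Matrix (Fin m) (Fin n) ℝ) (δ : ℝ)
    (S₁ S₂ : Finset (Fin n))
    (hRIP : RIPConst Φ K δ) (hδ : δ < 1)
    (hdisj : Disjoint S₁ S₂) (hcard : S₁.card + S₂.card ≤ K)
    (hrank : LinearIndependent ℝ (fun j : {i // i ∈ S₂} => col Φ (j : Fin n)))
    (w : Vec m) :
    ‖colDots Φ S₁ (perpProj Φ S₂ w)‖ ≤ Real.sqrt (1 + δ) * ‖w‖ :=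
  stmt17_general (fun u hu =>
    (hRIP.1.2 u ((Finset.card_le_card hu).trans (Nat.le_of_add_right_le hcard))).2) S₂ w

end
end
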